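/- arXiv:0811.2507 — 5 statements merged into one kernel-verified Lean document; each statement's English description precedes it below -/
import Mathlib

section
/- Let X be a nonempty compact metric space and let (R_n)_{n∈ℕ} be a sequence of equivalence relations on X such that: each R_n is closed as a subset of X × X, the relations are decreasing (x R_{n+1} y implies x R_n y for all n), and the intersection of all R_n is the diagonal (x R_n y for all n implies x = y). Give each quotient X/R_n the quotient topology and let q_n : X/R_{n+1} → X/R_n be the natural projection induced by the inclusion of relations. Then the map sending x ∈ X to the sequence of its equivalence classes ([x]_{R_0}, [x]_{R_1}, …) is a homeomorphism from X onto the inverse limit lim←(X/R_n, q_n) = { (y_n) ∈ ∏_n X/R_n : q_n(y_{n+1}) = y_n for all n }. -/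
/-!
For a closed set `C ⊆ X`, a coherent family `y` whose coordinates all lie in the images of `C`
determines a directed family of nonempty compact sets `C ∩ πᵢ⁻¹(yᵢ)`, and a point of their
intersection is a point of `C` over `y`. Taking `C = X` gives surjectivity of `X → lim← Yᵢ`. For
arbitrary `C` it says that the image of `C` is cut out of the limit by the conditions
`yᵢ ∈ πᵢ(C)`, which are closed because projecting a closed relation along a compact factor shows
that each `πᵢ` is a closed map.
-/

open Set Topology

section Quotient

variable {X : Type*} [TopologicalSpace X] {s : Setoid X}

theorem t1Space_quotient_of_isClosed_rel (hs : IsClosed {p : X × X | s p.1 p.2}) :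
    T1Space (Quotient s) := by
  have isQuotientMap_mk : IsQuotientMap (Quotient.mk s) := isQuotientMap_quot_mk
  refine ⟨Quotient.ind fun a => ?_⟩
  have preimage_class : Quotient.mk s ⁻¹' {⟦a⟧} = {x | s x a} := ext fun _ => Quotient.eq
  rw [← isQuotientMap_mk.isClosed_preimage, preimage_class]
  exact hs.preimage (Continuous.prodMk_left a)

theorem isClosedMap_quotient_mk_of_isClosed_rel [CompactSpace X]
    (hs : IsClosed {p : X × X | s p.1 p.2}) : IsClosedMap (Quotient.mk s) := by
  have isQuotientMap_mk : IsQuotientMap (Quotient.mk s) := isQuotientMap_quot_mk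
  intro C hC
  have saturation_eq :
      Quotient.mk s ⁻¹' (Quotient.mk s '' C) =
        Prod.snd '' ({p : X × X | s p.1 p.2} ∩ Prod.fst ⁻¹' C) := by
    ext x
    constructor
    · rintro ⟨c, hc, hcx⟩
      exact ⟨(c, x), ⟨Quotient.exact hcx, hc⟩, rfl⟩
    · rintro ⟨⟨c, _⟩, ⟨hcx, hc⟩, rfl⟩
      exact ⟨c, hc, Quotient.sound hcx⟩
  rw [← isQuotientMap_mk.isClosed_preimage, saturation_eq]
  exact isClosedMap_snd_of_compactSpace _ (hs.inter (hC.preimage continuous_fst))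

end Quotient

section InverseLimit

variable {X ι : Type*} [Preorder ι]

/-- The inverse limit of the spaces `Y i` along the bonding maps `f : Y j → Y i`, `i ≤ j`, as a
subset of the product. -/
def inverseLimit {Y : ι → Type*} (f : ∀ ⦃i j⦄, i ≤ j → Y j → Y i) : Set (∀ i, Y i) :=
  {y | ∀ ⦃i j⦄ (hij : i ≤ j), f hij (y j) = y i}

namespace inverseLimit

theorem mem_iff_forall_succ {Y : ℕ → Type*} (f : ∀ ⦃m n⦄, m ≤ n → Y n → Y m) [InverseSystem f]
    {y : ∀ n, Y n} : y ∈ inverseLimit f ↔ ∀ n, f n.le_succ (y (n + 1)) = y n := by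
  refine ⟨fun hy n => hy n.le_succ, fun hy m n hmn => ?_⟩
  induction n, hmn using Nat.le_induction with
  | base => exact InverseSystem.map_self (f := f) (y m)
  | succ n hmn ih => rw [← ih, ← hy n, InverseSystem.map_map (f := f) hmn n.le_succ]

variable {Y : ι → Type*} {f : ∀ ⦃i j⦄, i ≤ j → Y j → Y i} (π : ∀ i, X → Y i)
  (hπ : ∀ ⦃i j⦄ (hij : i ≤ j) (x : X), f hij (π j x) = π i x)

/-- The map `x ↦ (π i x)ᵢ` into the inverse limit induced by a family of maps compatible with the
bonding maps. -/
def lift (x : X) : inverseLimit f :=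
  ⟨fun i => π i x, fun _ _ hij => hπ hij x⟩

variable {π}

theorem lift_injective (hsep : ∀ x x', (∀ i, π i x = π i x') → x = x') :
    Function.Injective (lift π hπ) :=
  fun x x' hxx' => hsep x x' fun i => congrFun (congrArg Subtype.val hxx') i

variable [TopologicalSpace X] [∀ i, TopologicalSpace (Y i)]

theorem continuous_lift (hcont : ∀ i, Continuous (π i)) : Continuous (lift π hπ) :=
  (continuous_pi hcont).subtype_mk _

variable [CompactSpace X] [IsDirectedOrder ι] [Nonempty ι] [∀ i, T1Space (Y i)]

theorem image_lift_eq_iInter (hcont : ∀ i, Continuous (π i)) {C : Set X} (hC : IsClosed C) :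
    lift π hπ '' C = ⋂ i, (fun y : inverseLimit f => y.1 i) ⁻¹' (π i '' C) := by
  refine Subset.antisymm ?_ fun y hy => ?_
  · rintro _ ⟨x, hx, rfl⟩
    exact mem_iInter.mpr fun i => ⟨x, hx, rfl⟩
  let fiber (i : ι) : Set X := C ∩ π i ⁻¹' {y.1 i}
  have fiber_antitone : Antitone fiber := by
    rintro i j hij x ⟨hxC, hxy⟩
    refine ⟨hxC, ?_⟩
    rw [mem_preimage, mem_singleton_iff] at hxy ⊢
    rw [← hπ hij, hxy, y.2 hij]
  have isClosed_fiber (i : ι) : IsClosed (fiber i) :=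
    hC.inter (isClosed_singleton.preimage (hcont i))
  obtain ⟨x, hx⟩ : (⋂ i, fiber i).Nonempty :=
    IsCompact.nonempty_iInter_of_directed_nonempty_isCompact_isClosed fiber
      fiber_antitone.directed_ge (mem_iInter.mp hy) (fun i => (isClosed_fiber i).isCompact)
      isClosed_fiber
  rw [mem_iInter] at hx
  exact ⟨x, (hx (Classical.arbitrary ι)).1, Subtype.ext (funext fun i => (hx i).2)⟩

theorem lift_surjective (hcont : ∀ i, Continuous (π i))
    (hsurj : ∀ i, Function.Surjective (π i)) : Function.Surjective (lift π hπ) := by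
  rw [← range_eq_univ, ← image_univ, image_lift_eq_iInter hπ hcont isClosed_univ]
  simp only [image_univ, (hsurj _).range_eq, preimage_univ, iInter_univ]

theorem isClosedMap_lift (hcont : ∀ i, Continuous (π i)) (hclosed : ∀ i, IsClosedMap (π i)) :
    IsClosedMap (lift π hπ) := by
  intro C hC
  rw [image_lift_eq_iInter hπ hcont hC]
  exact isClosed_iInter fun i =>
    (hclosed i C hC).preimage ((continuous_apply i).comp continuous_subtype_val)

theorem isHomeomorph_lift (hcont : ∀ i, Continuous (π i)) (hclosed : ∀ i, IsClosedMap (π i))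
    (hsurj : ∀ i, Function.Surjective (π i)) (hsep : ∀ x x', (∀ i, π i x = π i x') → x = x') :
    IsHomeomorph (lift π hπ) :=
  isHomeomorph_iff_continuous_isClosedMap_bijective.mpr
    ⟨continuous_lift hπ hcont, isClosedMap_lift hπ hcont hclosed,
      lift_injective hπ hsep, lift_surjective hπ hcont hsurj⟩

end inverseLimit

theorem inverseSystem_quotient {R : ι → Setoid X} (hR : Antitone R) :
    InverseSystem fun _ _ hij => Setoid.map_of_le (hR hij) where
  map_self _ := Quotient.ind fun _ => rfl
  map_map _ _ _ _ _ := Quotient.ind fun _ => rfl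

theorem stmt_0_general [TopologicalSpace X] [CompactSpace X] [IsDirectedOrder ι] [Nonempty ι]
    (R : ι → Setoid X) (hclosed : ∀ i, IsClosed {p : X × X | R i p.1 p.2}) (hR : Antitone R)
    (hdiag : ∀ x y, (∀ i, R i x y) → x = y) :
    ∃ h : X ≃ₜ inverseLimit fun _ _ hij => Setoid.map_of_le (hR hij),
      ∀ x i, (h x).1 i = Quotient.mk (R i) x := by
  have (i : ι) : T1Space (Quotient (R i)) := t1Space_quotient_of_isClosed_rel (hclosed i)
  have isHomeomorph_classes :=
    inverseLimit.isHomeomorph_lift (π := fun i => Quotient.mk (R i))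
      (f := fun _ _ hij => Setoid.map_of_le (hR hij)) (fun _ _ _ _ => rfl)
      (fun _ => continuous_quotient_mk')
      (fun i => isClosedMap_quotient_mk_of_isClosed_rel (hclosed i))
      (fun _ => Quotient.mk_surjective) fun x y hxy => hdiag x y fun i => Quotient.exact (hxy i)
  exact ⟨isHomeomorph_classes.homeomorph, fun _ _ => rfl⟩

end InverseLimit

/-- Let `X` be a nonempty compact metric space and `R n` a sequence of equivalence
relations on `X` such that each `R n` is closed in `X × X`, the relations are decreasing,
and their intersection is the diagonal.  Give each quotient `X ⧸ R n` the quotient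
topology, with bonding maps `q n : X ⧸ R (n+1) → X ⧸ R n` induced by the inclusion of
relations.  Then `x ↦ ([x]_{R 0}, [x]_{R 1}, …)` is a homeomorphism from `X` onto the
inverse limit `lim← (X ⧸ R n, q n)`, i.e. the subspace
`{ y ∈ ∏ n, X ⧸ R n : q n (y (n+1)) = y n }` of the product. -/
theorem stmt_0 {X : Type*} [MetricSpace X] [CompactSpace X] [Nonempty X]
    (R : ℕ → Setoid X)
    (hclosed : ∀ n, IsClosed {p : X × X | (R n).r p.1 p.2})
    (hdec : ∀ n x y, (R (n + 1)).r x y → (R n).r x y)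
    (hdiag : ∀ x y, (∀ n, (R n).r x y) → x = y) :
    ∃ h : X ≃ₜ
      {y : (n : ℕ) → Quotient (R n) //
        ∀ n, Quotient.lift (Quotient.mk (R n))
          (fun a b hab => Quotient.sound (hdec n a b hab)) (y (n + 1)) = y n},
      ∀ (x : X) (n : ℕ), (h x : (n : ℕ) → Quotient (R n)) n = Quotient.mk (R n) x := by
  have hR : Antitone R := antitone_nat_of_succ_le hdec
  have := inverseSystem_quotient hR
  obtain ⟨h, hh⟩ := stmt_0_general R hclosed hR hdiag
  exact ⟨h.trans ((Homeomorph.refl _).subtype fun _ => inverseLimit.mem_iff_forall_succ _), hh⟩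
end

section
/- Let R be a commutative ring, M an R-module, and f : M → M an R-linear endomorphism. Let A ⊆ B be submodules of M with f(A) ⊆ A and f(B) ⊆ B, and suppose there exists N ∈ ℕ with f^N(B) ⊆ A. Then the natural quotient maps M/A → M/B (at every stage) induce an isomorphism between the direct limit of the system M/A →^{f̄} M/A →^{f̄} ⋯ and the direct limit of the system M/B →^{f̄} M/B →^{f̄} ⋯, where f̄ denotes the endomorphism induced by f on each quotient. -/
/-!
In the direct limit of the iterates of `f̄` on `M ⧸ A`, the class of `x` at any stage vanishes as
soon as some `f ^ n` carries `x` into `A`. So if every element of `B` is eventually carried into `A`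
and conversely, each of the two families of maps `M → lim (M ⧸ A)` and `M → lim (M ⧸ B)` factors
through the quotients defining the other limit, and the induced maps are inverse to each other.
-/

theorem apply_add_iterate {α β : Type*} {g : α → α} {φ : ℕ → α → β}
    (hφ : ∀ i x, φ (i + 1) (g x) = φ i x) (i n : ℕ) (x : α) : φ (i + n) (g^[n] x) = φ i x := by
  induction n with
  | zero => rfl
  | succ n ih => rw [Function.iterate_succ_apply', ← add_assoc, hφ, ih]

section

variable {R : Type*} [Semiring R] {P Q : Type*} [AddCommMonoid P] [Module R P]
  [AddCommMonoid Q] [Module R Q]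

/-- The direct limit of the sequence `P →^g P →^g ⋯`. It is reducible, so that the results on
`Module.DirectLimit` apply to it directly. -/
abbrev IterateLimit (g : Module.End R P) : Type _ :=
  Module.DirectLimit (R := R) (ι := ℕ) (fun _ : ℕ => P) (fun i j _ => g ^ (j - i))

namespace IterateLimit

/-- The canonical map from stage `i` of the sequence `P →^g P →^g ⋯` to its direct limit. -/
noncomputable abbrev of (g : Module.End R P) (i : ℕ) : P →ₗ[R] IterateLimit g :=
  Module.DirectLimit.of R ℕ (fun _ : ℕ => P) (fun i j _ => g ^ (j - i)) i

theorem of_succ_apply (g : Module.End R P) (i : ℕ) (x : P) : of g (i + 1) (g x) = of g i x := by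
  simpa only [Nat.add_sub_cancel_left, pow_one] using
    Module.DirectLimit.of_f (R := R) (G := fun _ : ℕ => P) (f := fun i j _ => g ^ (j - i))
      (hij := Nat.le_add_right i 1) (x := x)

theorem of_eq_zero_of_pow_apply_eq_zero {g : Module.End R P} {n : ℕ} {x : P}
    (hx : (g ^ n) x = 0) (i : ℕ) : of g i x = 0 := by
  rw [← apply_add_iterate (φ := fun i => ⇑(of g i)) (of_succ_apply g) i n x,
    ← Module.End.pow_apply, hx, map_zero]

/-- The map out of the direct limit of `P →^g P →^g ⋯` induced by maps `φ i : P → Q`, where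
compatibility is only required between consecutive stages. -/
noncomputable def lift (g : Module.End R P) (φ : ℕ → P →ₗ[R] Q)
    (hφ : ∀ i x, φ (i + 1) (g x) = φ i x) : IterateLimit g →ₗ[R] Q :=
  Module.DirectLimit.lift R ℕ _ _ φ fun i j hij x => by
    simpa only [Nat.add_sub_cancel' hij, Module.End.pow_apply] using
      apply_add_iterate (φ := fun i => ⇑(φ i)) hφ i (j - i) x

theorem lift_of (g : Module.End R P) (φ : ℕ → P →ₗ[R] Q) (hφ : ∀ i x, φ (i + 1) (g x) = φ i x)
    (i : ℕ) (x : P) : lift g φ hφ (of g i x) = φ i x :=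
  Module.DirectLimit.lift_of ..

end IterateLimit

end

section

variable {R : Type*} [Ring R] {M : Type*} [AddCommGroup M] [Module R M]
  {f : Module.End R M} {A B : Submodule R M}

namespace IterateLimit

theorem of_mapQ_mk_eq_zero (hA : A ≤ A.comap f) {x : M} (hx : ∃ n : ℕ, (f ^ n) x ∈ A) (i : ℕ) :
    of (A.mapQ A f hA) i (Submodule.Quotient.mk x) = 0 := by
  obtain ⟨n, hn⟩ := hx
  refine of_eq_zero_of_pow_apply_eq_zero (n := n) ?_ i
  rw [← Submodule.mapQ_pow, Submodule.mapQ_apply, Submodule.Quotient.mk_eq_zero]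
  exact hn

/-- The map from the limit of `M ⧸ A →^f̄ M ⧸ A →^f̄ ⋯` to that of `M ⧸ B →^f̄ M ⧸ B →^f̄ ⋯` sending
the class of `x` at stage `i` to the class of `x` at stage `i`. It exists even where the identity
of `M` does not descend to a map `M ⧸ A → M ⧸ B`. -/
noncomputable def mapQ (hA : A ≤ A.comap f) (hB : B ≤ B.comap f)
    (hAB : ∀ x ∈ A, ∃ n : ℕ, (f ^ n) x ∈ B) :
    IterateLimit (A.mapQ A f hA) →ₗ[R] IterateLimit (B.mapQ B f hB) :=
  lift (A.mapQ A f hA)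
    (fun i => A.liftQ (of (B.mapQ B f hB) i ∘ₗ B.mkQ) fun x hx =>
      of_mapQ_mk_eq_zero hB (hAB x hx) i)
    fun i x => by
      obtain ⟨x, rfl⟩ := Submodule.Quotient.mk_surjective A x
      exact of_succ_apply (B.mapQ B f hB) i (Submodule.Quotient.mk x)

theorem mapQ_of_mk (hA : A ≤ A.comap f) (hB : B ≤ B.comap f)
    (hAB : ∀ x ∈ A, ∃ n : ℕ, (f ^ n) x ∈ B) (i : ℕ) (x : M) :
    mapQ hA hB hAB (of (A.mapQ A f hA) i (Submodule.Quotient.mk x)) =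
      of (B.mapQ B f hB) i (Submodule.Quotient.mk x) :=
  lift_of ..

theorem mapQ_comp_mapQ (hA : A ≤ A.comap f) (hB : B ≤ B.comap f)
    (hAB : ∀ x ∈ A, ∃ n : ℕ, (f ^ n) x ∈ B) (hBA : ∀ x ∈ B, ∃ n : ℕ, (f ^ n) x ∈ A) :
    mapQ hB hA hBA ∘ₗ mapQ hA hB hAB = LinearMap.id := by
  ext i x
  simp only [LinearMap.comp_apply, LinearMap.id_apply, Submodule.mkQ_apply]
  rw [mapQ_of_mk, mapQ_of_mk]

end IterateLimit

open IterateLimit in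
theorem stmt_4_general (hA : A ≤ A.comap f) (hB : B ≤ B.comap f)
    (hAB : ∀ x ∈ A, ∃ n : ℕ, (f ^ n) x ∈ B) (hBA : ∀ x ∈ B, ∃ n : ℕ, (f ^ n) x ∈ A) :
    ∃ e : IterateLimit (A.mapQ A f hA) ≃ₗ[R] IterateLimit (B.mapQ B f hB),
      ∀ (i : ℕ) (x : M), e (of (A.mapQ A f hA) i (Submodule.Quotient.mk x)) =
        of (B.mapQ B f hB) i (Submodule.Quotient.mk x) :=
  ⟨.ofLinearMap (mapQ hA hB hAB) (mapQ hB hA hBA)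
      (mapQ_comp_mapQ hB hA hBA hAB)
      (mapQ_comp_mapQ hA hB hAB hBA),
    mapQ_of_mk hA hB hAB⟩

end

/-- Let `f : M → M` be an `R`-linear endomorphism, `A ⊆ B` submodules of `M` with
`f(A) ⊆ A`, `f(B) ⊆ B`, and `f^N(B) ⊆ A` for some `N`.  Then the stage-wise quotient maps
`M⧸A → M⧸B` induce an isomorphism between the direct limit of `M⧸A →^f̄ M⧸A →^f̄ ⋯` and the
direct limit of `M⧸B →^f̄ M⧸B →^f̄ ⋯`, where `f̄` is the endomorphism induced by `f` on each
quotient and the bonding map from stage `i` to stage `j` is `f̄^(j-i)`. -/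
theorem stmt_4 {R : Type*} [CommRing R] {M : Type*} [AddCommGroup M] [Module R M]
    (f : Module.End R M) (A B : Submodule R M) (hAB : A ≤ B)
    (hA : A ≤ A.comap f) (hB : B ≤ B.comap f) (N : ℕ)
    (hN : B.map (f ^ N) ≤ A) :
    ∃ e :
      Module.DirectLimit (R := R) (ι := ℕ) (fun _ : ℕ => M ⧸ A)
          (fun i j _ => (Submodule.mapQ A A f hA) ^ (j - i)) ≃ₗ[R]
        Module.DirectLimit (R := R) (ι := ℕ) (fun _ : ℕ => M ⧸ B)
          (fun i j _ => (Submodule.mapQ B B f hB) ^ (j - i)),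
      ∀ (i : ℕ) (x : M),
        e (Module.DirectLimit.of R ℕ (fun _ : ℕ => M ⧸ A)
            (fun i j _ => (Submodule.mapQ A A f hA) ^ (j - i)) i (Submodule.Quotient.mk x)) =
          Module.DirectLimit.of R ℕ (fun _ : ℕ => M ⧸ B)
            (fun i j _ => (Submodule.mapQ B B f hB) ^ (j - i)) i (Submodule.Quotient.mk x) :=
  stmt_4_general hA hB (fun _ hx => ⟨0, hAB hx⟩) fun _ hx => ⟨N, hN (Submodule.mem_map_of_mem hx)⟩
end

section
/- Let M be the integer matrix [[0, 2], [1, 1]], acting ℤ-linearly on ℤ² by v ↦ M·v. Then the direct limit of the ℕ-indexed system ℤ² →^M ℤ² →^M ℤ² →^M ⋯ (bonding map from stage i to stage j equal to M^{j−i}) is isomorphic, as an abelian group, to ℤ[1/2] ⊕ ℤ, where ℤ[1/2] denotes the localization of ℤ away from 2 (the group of dyadic rationals). -/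
/-!
A linear map `g : M → N` intertwining an endomorphism `f` of `M` with an automorphism `e` of `N`
induces maps `e⁻ⁱ ∘ g` on the stages of the system `M → M → ⋯` with bonding map `f`. The induced
map on the direct limit is bijective as soon as `f` is eventually zero on each element of `ker g`
and each element of `N` is eventually moved into `range g` by `e`.

The matrix has eigenvalues `2` and `-1`, but is not diagonalizable over `ℤ`: its eigenvectors
`(1, 1)` and `(2, -1)` span a sublattice of index `3`. In the coordinates `(v₀ - v₁, v₁)` it becomes
the block triangular map `(y, x) ↦ (-y, 2x + y)`, which is already enough: inverting it amounts to
inverting its diagonal entries, and only the entry `2` is not yet invertible.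
-/

open LinearMap

section Ring

variable {R M N P : Type*} [Ring R] [AddCommGroup M] [AddCommGroup N] [AddCommGroup P]
  [Module R M] [Module R N] [Module R P]

/-- `g : M → N` exhibits `N`, with its automorphism `e`, as the module obtained from `M` by
inverting the endomorphism `f`. Seeing `M` and `N` as `R[X]`-modules through `f` and `e`, this says
that `g` is a localization at the powers of `X`. -/
structure IsEndLocalization (f : Module.End R M) (e : Module.End R N) (g : M →ₗ[R] N) : Prop where
  isUnit : IsUnit e
  comp_eq : e ∘ₗ g = g ∘ₗ f
  exists_pow_eq_zero : ∀ x, g x = 0 → ∃ k : ℕ, (f ^ k) x = 0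
  exists_pow_mem_range : ∀ y, ∃ k : ℕ, (e ^ k) y ∈ range g

/-- The block lower triangular endomorphism `(y, x) ↦ (u y, f x + c y)`; the version of
`LinearEquiv.skewProd` whose diagonal blocks need not be invertible. -/
def skewProdEnd (u : Module.End R P) (f : Module.End R M) (c : P →ₗ[R] M) :
    Module.End R (P × M) :=
  (u ∘ₗ fst R P M).prod (f ∘ₗ snd R P M + c ∘ₗ fst R P M)

theorem skewProdEnd_apply (u : Module.End R P) (f : Module.End R M) (c : P →ₗ[R] M) (z : P × M) :
    skewProdEnd u f c z = (u z.1, f z.2 + c z.1) :=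
  rfl

theorem isUnit_skewProdEnd {u : Module.End R P} {f : Module.End R M} (hu : IsUnit u)
    (hf : IsUnit f) (c : P →ₗ[R] M) : IsUnit (skewProdEnd u f c) := by
  rw [Module.End.isUnit_iff] at hu hf ⊢
  exact ((LinearEquiv.ofBijective u hu).skewProd (LinearEquiv.ofBijective f hf) c).bijective

theorem skewProdEnd_pow_inr (u : Module.End R P) (f : Module.End R M) (c : P →ₗ[R] M) (k : ℕ)
    (x : M) : (skewProdEnd u f c ^ k) (0, x) = (0, (f ^ k) x) := by
  have inr_comm : skewProdEnd u f c ∘ₗ inr R P M = inr R P M ∘ₗ f := by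
    ext <;> simp [skewProdEnd_apply]
  exact congr($(Module.End.commute_pow_left_of_commute inr_comm k) x)

namespace IsEndLocalization

variable {f : Module.End R M} {e : Module.End R N} {g : M →ₗ[R] N}

theorem pow_apply (h : IsEndLocalization f e g) (k : ℕ) (x : M) :
    (e ^ k) (g x) = g ((f ^ k) x) :=
  congr($(Module.End.commute_pow_left_of_commute h.comp_eq k) x)

theorem comp_linearEquiv (h : IsEndLocalization f e g) {f' : Module.End R P} (φ : P ≃ₗ[R] M)
    (hφ : f ∘ₗ φ.toLinearMap = φ.toLinearMap ∘ₗ f') :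
    IsEndLocalization f' e (g ∘ₗ φ.toLinearMap) where
  isUnit := h.isUnit
  comp_eq := by rw [← comp_assoc, h.comp_eq, comp_assoc, hφ, comp_assoc]
  exists_pow_eq_zero x hx := by
    obtain ⟨k, hk⟩ := h.exists_pow_eq_zero (φ x) hx
    have φ_pow : (f ^ k) (φ x) = φ ((f' ^ k) x) :=
      congr($(Module.End.commute_pow_left_of_commute hφ k) x)
    exact ⟨k, by rwa [φ_pow, φ.map_eq_zero_iff] at hk⟩
  exists_pow_mem_range y := by
    simpa only [range_comp_of_range_eq_top g φ.range] using h.exists_pow_mem_range y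

theorem skewProd (h : IsEndLocalization f e g) {u : Module.End R P} (hu : IsUnit u)
    (c : P →ₗ[R] M) :
    IsEndLocalization (skewProdEnd u f c) (skewProdEnd u e (g ∘ₗ c)) (LinearMap.id.prodMap g) := by
  have comp_eq : skewProdEnd u e (g ∘ₗ c) ∘ₗ LinearMap.id.prodMap g =
      LinearMap.id.prodMap g ∘ₗ skewProdEnd u f c := by
    have g_comm (x : M) : e (g x) = g (f x) := congr($h.comp_eq x)
    ext <;> simp [skewProdEnd_apply, g_comm]
  refine ⟨isUnit_skewProdEnd hu h.isUnit _, comp_eq, ?_, ?_⟩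
  · rintro ⟨y, x⟩ hyx
    obtain ⟨rfl, hx⟩ : y = 0 ∧ g x = 0 := Prod.mk_eq_zero.1 hyx
    obtain ⟨k, hk⟩ := h.exists_pow_eq_zero x hx
    exact ⟨k, by rw [skewProdEnd_pow_inr, hk, Prod.mk_zero_zero]⟩
  · rintro ⟨y, z⟩
    obtain ⟨k, x, hx⟩ := h.exists_pow_mem_range z
    have left_mem : (skewProdEnd u e (g ∘ₗ c) ^ k) (y, 0) ∈ range (LinearMap.id.prodMap g) :=
      ⟨(skewProdEnd u f c ^ k) (y, 0), by
        simpa using congr($(Module.End.commute_pow_left_of_commute comp_eq k) (y, 0)).symm⟩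
    have right_mem : (skewProdEnd u e (g ∘ₗ c) ^ k) (0, z) ∈ range (LinearMap.id.prodMap g) :=
      ⟨(0, x), by rw [skewProdEnd_pow_inr, ← hx]; rfl⟩
    refine ⟨k, ?_⟩
    simpa only [← map_add, Prod.mk_add_mk, add_zero, zero_add] using add_mem left_mem right_mem

/-- The map `e⁻ⁱ ∘ g` from the `i`-th stage of the system `M → M → ⋯` with bonding map `f`. -/
noncomputable def stageMap (h : IsEndLocalization f e g) (i : ℕ) : M →ₗ[R] N :=
  (h.isUnit.unit⁻¹ ^ i : (Module.End R N)ˣ).val ∘ₗ g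

theorem pow_stageMap (h : IsEndLocalization f e g) (i : ℕ) (x : M) :
    (e ^ i) (h.stageMap i x) = g x := by
  have pow_mul_inv_pow : e ^ i * (h.isUnit.unit⁻¹ ^ i : (Module.End R N)ˣ).val = 1 := by
    rw [inv_pow, ← Units.mul_inv (h.isUnit.unit ^ i), Units.val_pow_eq_pow_val, IsUnit.unit_spec]
  exact congr($pow_mul_inv_pow (g x))

theorem pow_injective (h : IsEndLocalization f e g) (i : ℕ) : Function.Injective ⇑(e ^ i) :=
  ((Module.End.isUnit_iff _).1 (h.isUnit.pow i)).injective

theorem stageMap_pow_sub (h : IsEndLocalization f e g) {i j : ℕ} (hij : i ≤ j) (x : M) :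
    h.stageMap j ((f ^ (j - i)) x) = h.stageMap i x := by
  apply h.pow_injective j
  calc (e ^ j) (h.stageMap j ((f ^ (j - i)) x))
      = (e ^ (j - i)) (g x) := by rw [h.pow_stageMap, h.pow_apply]
    _ = (e ^ j) (h.stageMap i x) := by
      rw [← h.pow_stageMap i, ← Module.End.mul_apply, ← pow_add, Nat.sub_add_cancel hij]

/-- The map from the direct limit of `M → M → ⋯` to `N` induced by the maps `e⁻ⁱ ∘ g`. -/
noncomputable def directLimitMap (h : IsEndLocalization f e g) :
    Module.DirectLimit (fun _ : ℕ => M) (fun i j _ => f ^ (j - i)) →ₗ[R] N :=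
  Module.DirectLimit.lift R ℕ _ _ h.stageMap fun _ _ hij x => h.stageMap_pow_sub hij x

theorem directLimitMap_injective (h : IsEndLocalization f e g) :
    Function.Injective h.directLimitMap := by
  rw [injective_iff_map_eq_zero]
  intro z hz
  obtain ⟨i, x, rfl⟩ := Module.DirectLimit.exists_of z
  have stage_zero : h.stageMap i x = 0 := by
    simpa only [directLimitMap, Module.DirectLimit.lift_of] using hz
  have g_zero : g x = 0 := by rw [← h.pow_stageMap i, stage_zero, map_zero]
  obtain ⟨k, hk⟩ := h.exists_pow_eq_zero x g_zero
  rw [← Module.DirectLimit.of_f (hij := Nat.le_add_right i k), Nat.add_sub_cancel_left, hk,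
    map_zero]

theorem directLimitMap_surjective (h : IsEndLocalization f e g) :
    Function.Surjective h.directLimitMap := by
  intro y
  obtain ⟨k, x, hx⟩ := h.exists_pow_mem_range y
  refine ⟨Module.DirectLimit.of R ℕ _ _ k x, h.pow_injective k ?_⟩
  rw [directLimitMap, Module.DirectLimit.lift_of, h.pow_stageMap, hx]

/-- The direct limit of `M → M → ⋯` with bonding map `f` is the module obtained by inverting `f`. -/
noncomputable def directLimitEquiv (h : IsEndLocalization f e g) :
    Module.DirectLimit (fun _ : ℕ => M) (fun i j _ => f ^ (j - i)) ≃ₗ[R] N :=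
  LinearEquiv.ofBijective h.directLimitMap
    ⟨h.directLimitMap_injective, h.directLimitMap_surjective⟩

end IsEndLocalization

end Ring

section CommRing

variable {R : Type*} [CommRing R]

theorem isEndLocalization_algebraMap {M N : Type*} [AddCommGroup M] [AddCommGroup N] [Module R M]
    [Module R N] (r : R) (g : M →ₗ[R] N) [IsLocalizedModule.Away r g] :
    IsEndLocalization (algebraMap R (Module.End R M) r) (algebraMap R (Module.End R N) r) g where
  isUnit := IsLocalizedModule.Away.isUnit_algebraMap g r
  comp_eq := by ext; simp
  exists_pow_eq_zero x hx := by
    obtain ⟨k, hk⟩ := IsLocalizedModule.Away.exists_of_eq r (hx.trans g.map_zero.symm)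
    exact ⟨k, by rwa [← map_pow, Module.algebraMap_end_apply, ← smul_zero (r ^ k)]⟩
  exists_pow_mem_range y := by
    obtain ⟨k, x, hx⟩ := IsLocalizedModule.Away.surj g r y
    exact ⟨k, x, by rw [← map_pow]; exact hx.symm⟩

variable (R) in
/-- The coordinates `(v₀ - v₁, v₁)` on `R²`. The first one is a left eigenvector of
`!![0, r; 1, r - 1]` for the eigenvalue `-1`, which makes the matrix triangular. -/
def subCoordEquiv : (Fin 2 → R) ≃ₗ[R] R × R where
  toFun v := (v 0 - v 1, v 1)
  invFun z := ![z.1 + z.2, z.2]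
  map_add' v w := by ext <;> simp [add_sub_add_comm]
  map_smul' a v := by ext <;> simp [mul_sub]
  left_inv v := by ext i; fin_cases i <;> simp
  right_inv z := by ext <;> simp

theorem skewProdEnd_comp_subCoordEquiv (r : R) :
    skewProdEnd (-1) (algebraMap R (Module.End R R) r) LinearMap.id ∘ₗ
        (subCoordEquiv R).toLinearMap =
      (subCoordEquiv R).toLinearMap ∘ₗ Matrix.toLin' !![0, r; 1, r - 1] := by
  refine LinearMap.ext fun v => ?_
  have mulVec_v : Matrix.toLin' !![0, r; 1, r - 1] v = ![r * v 1, v 0 + (r - 1) * v 1] := by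
    ext i; fin_cases i <;> simp [Matrix.vecHead, Matrix.vecTail]
  calc skewProdEnd (-1) (algebraMap R (Module.End R R) r) LinearMap.id (subCoordEquiv R v)
      = (-(v 0 - v 1), r * v 1 + (v 0 - v 1)) := rfl
    _ = (r * v 1 - (v 0 + (r - 1) * v 1), v 0 + (r - 1) * v 1) := by ext <;> dsimp only <;> ring
    _ = subCoordEquiv R (Matrix.toLin' !![0, r; 1, r - 1] v) := by rw [mulVec_v]; rfl

theorem stmt_7_general (r : R) :
    Nonempty
      (Module.DirectLimit (R := R) (ι := ℕ) (fun _ : ℕ => Fin 2 → R)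
          (fun i j _ => (Matrix.toLin' !![0, r; 1, r - 1]) ^ (j - i)) ≃ₗ[R]
        Localization.Away r × R) := by
  have inverts_entry :=
    isEndLocalization_algebraMap r (Algebra.linearMap R (Localization.Away r))
  have isUnit_neg_one : IsUnit (-1 : Module.End R R) :=
    (Module.End.isUnit_iff _).2 (LinearEquiv.neg R).bijective
  have inverts_triangular := inverts_entry.skewProd isUnit_neg_one LinearMap.id
  have inverts_matrix :=
    inverts_triangular.comp_linearEquiv (subCoordEquiv R) (skewProdEnd_comp_subCoordEquiv r)
  exact ⟨inverts_matrix.directLimitEquiv ≪≫ₗ LinearEquiv.prodComm R R (Localization.Away r)⟩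

end CommRing

/-- The direct limit of the ℕ-indexed system `ℤ² →^M ℤ² →^M ⋯` for
`M = [[0,2],[1,1]]` (bonding map from stage `i` to stage `j` given by `M^(j-i)`)
is isomorphic, as an abelian group, to `ℤ[1/2] ⊕ ℤ`. -/
theorem stmt_7 :
    Nonempty
      (Module.DirectLimit (R := ℤ) (ι := ℕ) (fun _ : ℕ => Fin 2 → ℤ)
          (fun i j _ => (Matrix.toLin' (!![0, 2; 1, 1] : Matrix (Fin 2) (Fin 2) ℤ)) ^ (j - i)) ≃+
        Localization.Away (2 : ℤ) × ℤ) :=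
  (stmt_7_general (2 : ℤ)).map AddEquivClass.toAddEquiv
end

section
/- Let M be the integer matrix [[1, 1], [1, 1]], acting ℤ-linearly on ℤ² by v ↦ M·v. Then the direct limit of the ℕ-indexed system ℤ² →^M ℤ² →^M ℤ² →^M ⋯ (bonding map from stage i to stage j equal to M^{j−i}) is isomorphic, as an abelian group, to ℤ[1/2], the localization of ℤ away from 2. -/
/-!
The matrix `M = [[1,1],[1,1]]` has rank one: it is `A ∘ B` with `A a = (a, a)` and
`B (x, y) = x + y`. Composing in the other order gives `B ∘ A = 2` on `ℤ`. The limits of the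
iterates of `A ∘ B` and of `B ∘ A` always agree: `B` induces a map between them, whose inverse is
induced by `A` followed by the shift of stages. Finally, the limit of the iterates of multiplication
by `r` on a module is its localization away from `r`, because shifting the stages inverts `r`.
-/

/-- The direct limit of `M →^f M →^f M →^f ⋯`, for an endomorphism `f` of a module `M`.
The bonding map from stage `i` to stage `j` is `f ^ (j - i)`; the subtraction does not truncate,
since `i ≤ j`. -/
abbrev EndLimit {R M : Type*} [Semiring R] [AddCommMonoid M] [Module R M]
    (f : Module.End R M) : Type _ :=
  Module.DirectLimit (fun _ : ℕ => M) (fun i j _ => f ^ (j - i))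

namespace EndLimit

section Semiring

variable {R M N P : Type*} [Semiring R] [AddCommMonoid M] [Module R M] [AddCommMonoid N]
  [Module R N] [AddCommMonoid P] [Module R P]

instance directedSystem_pow (f : Module.End R M) :
    DirectedSystem (fun _ : ℕ => M) (fun i j (_ : i ≤ j) => ⇑(f ^ (j - i))) where
  map_self i x := by simp
  map_map k j i hij hjk x := by
    rw [← Module.End.mul_apply, ← pow_add, tsub_add_tsub_cancel hjk hij]

/-- The canonical map from the `i`-th copy of `M` to the limit of the iterates of `f`. -/
noncomputable abbrev of (f : Module.End R M) (i : ℕ) : M →ₗ[R] EndLimit f :=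
  Module.DirectLimit.of R ℕ (fun _ : ℕ => M) (fun i j _ => f ^ (j - i)) i

theorem of_pow_apply (f : Module.End R M) (i : ℕ) (x : M) : of f i ((f ^ i) x) = of f 0 x :=
  Module.DirectLimit.of_f (hij := i.zero_le)

theorem of_succ_apply (f : Module.End R M) (i : ℕ) (x : M) : of f (i + 1) (f x) = of f i x := by
  rw [← Module.DirectLimit.of_f (hij := i.le_add_right 1), add_tsub_cancel_left, pow_one]

theorem apply_pow_of_apply_succ {f : Module.End R M} {g : ℕ → M →ₗ[R] P}
    (hg : ∀ i x, g (i + 1) (f x) = g i x) (i j : ℕ) (hij : i ≤ j) (x : M) :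
    g j ((f ^ (j - i)) x) = g i x := by
  induction j, hij using Nat.le_induction with
  | base => simp
  | succ j hij ih => rw [Nat.sub_add_comm hij, pow_succ', Module.End.mul_apply, hg, ih]

/-- The universal property of `EndLimit f`: compatibility need only be checked between consecutive
stages. -/
noncomputable def lift (f : Module.End R M) (g : ℕ → M →ₗ[R] P)
    (hg : ∀ i x, g (i + 1) (f x) = g i x) : EndLimit f →ₗ[R] P :=
  Module.DirectLimit.lift R ℕ _ _ g (apply_pow_of_apply_succ hg)

@[simp]
theorem lift_of {f : Module.End R M} {g : ℕ → M →ₗ[R] P}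
    (hg : ∀ i x, g (i + 1) (f x) = g i x) (i : ℕ) (x : M) : lift f g hg (of f i x) = g i x :=
  Module.DirectLimit.lift_of g (apply_pow_of_apply_succ hg) x

/-- The endomorphism of `EndLimit f` that moves each stage to the next one; it is inverse to the
endomorphism induced by `f`. -/
noncomputable def shift (f : Module.End R M) : Module.End R (EndLimit f) :=
  lift f (fun i => of f (i + 1)) fun i x => of_succ_apply f (i + 1) x

@[simp]
theorem shift_of (f : Module.End R M) (i : ℕ) (x : M) : shift f (of f i x) = of f (i + 1) x :=
  lift_of _ i x

/-- The limits of the iterates of `A ∘ B` and of `B ∘ A` are isomorphic, via `B`. -/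
noncomputable def compCommEquiv (A : N →ₗ[R] M) (B : M →ₗ[R] N) :
    EndLimit (A ∘ₗ B) ≃ₗ[R] EndLimit (B ∘ₗ A) :=
  LinearEquiv.ofLinearMap
    (lift _ (fun i => of (B ∘ₗ A) i ∘ₗ B) fun i x => of_succ_apply (B ∘ₗ A) i (B x))
    (lift _ (fun i => of (A ∘ₗ B) (i + 1) ∘ₗ A) fun i y => of_succ_apply (A ∘ₗ B) (i + 1) (A y))
    (by ext i y; simpa using of_succ_apply (B ∘ₗ A) i y)
    (by ext i x; simpa using of_succ_apply (A ∘ₗ B) i x)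

end Semiring

section CommSemiring

variable {R M : Type*} [CommSemiring R] [AddCommMonoid M] [Module R M]

theorem isUnit_algebraMap_end (r : R) :
    IsUnit (algebraMap R (Module.End R (EndLimit (algebraMap R (Module.End R M) r))) r) := by
  set f := algebraMap R (Module.End R M) r
  have smul_shift : algebraMap R (Module.End R (EndLimit f)) r * shift f = 1 := by
    ext i x
    simpa [f] using of_succ_apply f i x
  have shift_smul : shift f * algebraMap R (Module.End R (EndLimit f)) r = 1 := by
    rw [← Algebra.commutes, smul_shift]
  exact ⟨⟨_, _, smul_shift, shift_smul⟩, rfl⟩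

instance isLocalizedModule_powers (r : R) :
    IsLocalizedModule (Submonoid.powers r) (of (algebraMap R (Module.End R M) r) 0) where
  map_units := by
    rintro ⟨_, n, rfl⟩
    simpa only [map_pow] using (isUnit_algebraMap_end r).pow n
  surj z := by
    obtain ⟨i, x, rfl⟩ := Module.DirectLimit.exists_of z
    refine ⟨(x, Submonoid.pow r i), ?_⟩
    rw [← of_pow_apply _ i x, ← map_pow, Module.algebraMap_end_apply, map_smul]
    rfl
  exists_of_eq {x y} h := by
    obtain ⟨n, _, hn⟩ := Module.DirectLimit.exists_eq_of_of_eq h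
    rw [tsub_zero, ← map_pow] at hn
    exact ⟨Submonoid.pow r n, hn⟩

/-- The limit of the iterates of multiplication by `r` on `R` is the ring `R[1/r]`. -/
noncomputable def algebraMapEquiv (r : R) :
    EndLimit (algebraMap R (Module.End R R) r) ≃ₗ[R] Localization.Away r :=
  IsLocalizedModule.linearEquiv (Submonoid.powers r) (of (algebraMap R (Module.End R R) r) 0)
    (Algebra.linearMap R (Localization.Away r))

end CommSemiring

end EndLimit

theorem stmt_8_general {R M : Type*} [CommSemiring R] [AddCommMonoid M] [Module R M]
    (φ : M →ₗ[R] R) (u : M) :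
    Nonempty (EndLimit (φ.smulRight u) ≃ₗ[R] Localization.Away (φ u)) := by
  let A := LinearMap.toSpanSingleton R M u
  have smulRight_eq : φ.smulRight u = A ∘ₗ φ := rfl
  have comp_eq_algebraMap : φ ∘ₗ A = algebraMap R (Module.End R R) (φ u) := by
    ext
    simp [A]
  rw [smulRight_eq]
  have e := EndLimit.compCommEquiv A φ
  rw [comp_eq_algebraMap] at e
  exact ⟨e.trans (EndLimit.algebraMapEquiv (φ u))⟩

/-- The direct limit of the ℕ-indexed system `ℤ² →^M ℤ² →^M ⋯` for
`M = [[1,1],[1,1]]` (bonding map from stage `i` to stage `j` given by `M^(j-i)`)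
is isomorphic, as an abelian group, to `ℤ[1/2]`. -/
theorem stmt_8 :
    Nonempty
      (Module.DirectLimit (R := ℤ) (ι := ℕ) (fun _ : ℕ => Fin 2 → ℤ)
          (fun i j _ => (Matrix.toLin' (!![1, 1; 1, 1] : Matrix (Fin 2) (Fin 2) ℤ)) ^ (j - i)) ≃+
        Localization.Away (2 : ℤ)) := by
  let φ : (Fin 2 → ℤ) →ₗ[ℤ] ℤ := ∑ i, LinearMap.proj i
  have toLin_eq : Matrix.toLin' !![1, 1; 1, 1] = φ.smulRight 1 := by
    ext i j
    fin_cases i <;> fin_cases j <;> simp [φ]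
  have two_eq : 2 = φ 1 := rfl
  rw [toLin_eq, two_eq]
  obtain ⟨e⟩ := stmt_8_general φ 1
  exact ⟨(e : _ ≃+ _)⟩
end

section
/- Let ∂₁ be the 4 × 8 integer matrix with rows (−1,1,0,0,−1,0,1,0), (1,−1,0,0,0,−1,0,1), (0,0,−1,1,1,0,−1,0), (0,0,1,−1,0,1,0,−1), and let ∂₂ be the 8 × 8 integer matrix with rows (1,1,0,1,1,2,1,1), (1,1,1,0,2,1,1,1), (1,1,1,0,2,1,1,1), (1,1,0,1,1,2,1,1), (1,1,1,0,1,0,1,1), (1,1,0,1,0,1,1,1), (1,1,0,1,0,1,1,1), (1,1,1,0,1,0,1,1). Then ∂₁ · ∂₂ = 0, so the transposed maps δ⁰ = ∂₁ᵀ : ℤ⁴ → ℤ⁸ and δ¹ = ∂₂ᵀ : ℤ⁸ → ℤ⁸ form a cochain complex (δ¹ ∘ δ⁰ = 0), and its cohomology groups are: ker δ⁰ ≅ ℤ, (ker δ¹)/(image δ⁰) ≅ ℤ², and ℤ⁸/(image δ¹) ≅ ℤ⁵. -/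
/-!
The complex `δ⁰, δ¹` deformation retracts onto its cohomology already over `ℤ`: there are integer
matrices `ιⁱ`, `πⁱ` and a homotopy `h¹, h²` with `δⁱ ιⁱ = 0`, `πⁱ δⁱ⁻¹ = 0`, `πⁱ ιⁱ = 1` and
`δⁱ⁻¹ hⁱ + ιⁱ πⁱ + hⁱ⁺¹ δⁱ = 1`. Such identities force `πⁱ` to induce an isomorphism from the `i`-th
cohomology onto a free module, and they persist under base change to any commutative ring.
-/

section Homotopy

variable {R L M N Q : Type*} [Ring R] [AddCommGroup L] [AddCommGroup M] [AddCommGroup N]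
  [AddCommGroup Q] [Module R L] [Module R M] [Module R N] [Module R Q]

/-- A linear map `π` split by `ι` identifies `M ⧸ S` with its codomain, as soon as `π` vanishes on
`S` and `ι ∘ π` is the identity modulo `S`. -/
noncomputable def quotientEquivOfSection (S : Submodule R M) (π : M →ₗ[R] Q) (ι : Q →ₗ[R] M)
    (hS : S ≤ LinearMap.ker π) (hπι : π ∘ₗ ι = .id) (hsub : ∀ x, x - ι (π x) ∈ S) :
    (M ⧸ S) ≃ₗ[R] Q :=
  have hker : S = LinearMap.ker π := le_antisymm hS fun x hx ↦ by
    simpa only [LinearMap.mem_ker.mp hx, map_zero, sub_zero] using hsub x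
  Submodule.quotEquivOfEq _ _ hker ≪≫ₗ
    π.quotKerEquivOfSurjective (Function.RightInverse.surjective (LinearMap.congr_fun hπι))

/-- Cohomology at the first term of a complex: `π` and `ι` are mutually inverse between `ker g`
and `Q` when `ι ∘ π` differs from the identity by `h ∘ g`. -/
def kerEquivOfHomotopy {g : M →ₗ[R] N} {π : M →ₗ[R] Q} {ι : Q →ₗ[R] M} {h : N →ₗ[R] M}
    (hgι : g ∘ₗ ι = 0) (hπι : π ∘ₗ ι = .id) (hid : ι ∘ₗ π + h ∘ₗ g = .id) :
    LinearMap.ker g ≃ₗ[R] Q :=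
  .ofLinearMap (π ∘ₗ (LinearMap.ker g).subtype)
    (ι.codRestrict (LinearMap.ker g) (LinearMap.congr_fun hgι)) hπι <| by
      ext x
      have hx : ι (π x) + h (g x) = x := LinearMap.congr_fun hid x
      rwa [LinearMap.mem_ker.mp x.2, map_zero, add_zero] at hx

/-- Cohomology at a middle term of a complex: `π` identifies `ker g ⧸ range f` with `Q` when
`ι ∘ π` differs from the identity by `f ∘ k + h ∘ g`. -/
noncomputable def kerQuotientRangeEquivOfHomotopy {f : L →ₗ[R] M} {g : M →ₗ[R] N} {π : M →ₗ[R] Q}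
    {ι : Q →ₗ[R] M} {k : M →ₗ[R] L} {h : N →ₗ[R] M} (hgι : g ∘ₗ ι = 0) (hπf : π ∘ₗ f = 0)
    (hπι : π ∘ₗ ι = .id) (hid : f ∘ₗ k + ι ∘ₗ π + h ∘ₗ g = .id) :
    (LinearMap.ker g ⧸ (LinearMap.range f).comap (LinearMap.ker g).subtype) ≃ₗ[R] Q :=
  quotientEquivOfSection _ (π ∘ₗ (LinearMap.ker g).subtype)
    (ι.codRestrict (LinearMap.ker g) (LinearMap.congr_fun hgι))
    (fun _ hx ↦ LinearMap.range_le_ker_iff.mpr hπf hx) hπι fun x ↦ by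
      have hx : f (k x) + ι (π x) + h (g x) = x := LinearMap.congr_fun hid x
      rw [LinearMap.mem_ker.mp x.2, map_zero, add_zero] at hx
      exact ⟨k x, eq_sub_of_add_eq hx⟩

/-- Cohomology at the last term of a complex: `π` identifies `M ⧸ range f` with `Q` when `ι ∘ π`
differs from the identity by `f ∘ k`. -/
noncomputable def quotientRangeEquivOfHomotopy {f : L →ₗ[R] M} {π : M →ₗ[R] Q} {ι : Q →ₗ[R] M}
    {k : M →ₗ[R] L} (hπf : π ∘ₗ f = 0) (hπι : π ∘ₗ ι = .id) (hid : f ∘ₗ k + ι ∘ₗ π = .id) :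
    (M ⧸ LinearMap.range f) ≃ₗ[R] Q :=
  quotientEquivOfSection _ π ι (LinearMap.range_le_ker_iff.mpr hπf) hπι
    fun x ↦ ⟨k x, eq_sub_of_add_eq (LinearMap.congr_fun hid x)⟩

end Homotopy

section BaseChange

variable {S l m n : Type*} (R : Type*) [CommSemiring S] [CommSemiring R] [Algebra S R]
  [Fintype n] [DecidableEq n]

/-- The `R`-linear map `(n → R) → (m → R)` defined by a matrix with entries in `S`, mapped to
the `S`-algebra `R`. -/
def toLinOver (A : Matrix m n S) : (n → R) →ₗ[R] (m → R) :=
  Matrix.toLin' (A.map (algebraMap S R))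

theorem toLinOver_zero : toLinOver R (0 : Matrix m n S) = 0 := by
  rw [toLinOver, Matrix.map_zero _ (map_zero _), map_zero]

theorem toLinOver_one : toLinOver R (1 : Matrix n n S) = .id := by
  rw [toLinOver, Matrix.map_one _ (map_zero _) (map_one _), Matrix.toLin'_one]

theorem toLinOver_add (A B : Matrix m n S) :
    toLinOver R (A + B) = toLinOver R A + toLinOver R B := by
  rw [toLinOver, Matrix.map_add _ (map_add _), map_add, toLinOver, toLinOver]

theorem toLinOver_mul [Fintype m] [DecidableEq m] (A : Matrix l m S) (B : Matrix m n S) :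
    toLinOver R (A * B) = toLinOver R A ∘ₗ toLinOver R B := by
  rw [toLinOver, Matrix.map_mul, Matrix.toLin'_mul, toLinOver, toLinOver]

end BaseChange

namespace Pinwheel

/-- The matrix `∂₁` of the boundary map from edges to vertices. -/
def boundary₁ : Matrix (Fin 4) (Fin 8) ℤ :=
  !![-1, 1, 0, 0, -1, 0, 1, 0;
      1, -1, 0, 0, 0, -1, 0, 1;
      0, 0, -1, 1, 1, 0, -1, 0;
      0, 0, 1, -1, 0, 1, 0, -1]

/-- The matrix `∂₂` of the boundary map from two-cells to edges. -/
def boundary₂ : Matrix (Fin 8) (Fin 8) ℤ :=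
  !![1, 1, 0, 1, 1, 2, 1, 1;
     1, 1, 1, 0, 2, 1, 1, 1;
     1, 1, 1, 0, 2, 1, 1, 1;
     1, 1, 0, 1, 1, 2, 1, 1;
     1, 1, 1, 0, 1, 0, 1, 1;
     1, 1, 0, 1, 0, 1, 1, 1;
     1, 1, 0, 1, 0, 1, 1, 1;
     1, 1, 1, 0, 1, 0, 1, 1]

/-- The matrix of the coboundary map `δ⁰`. -/
def coboundary₀ : Matrix (Fin 8) (Fin 4) ℤ := boundary₁.transpose

/-- The matrix of the coboundary map `δ¹`. -/
def coboundary₁ : Matrix (Fin 8) (Fin 8) ℤ := boundary₂.transpose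

/-- The component `h¹` of the homotopy, from edge cochains to vertex cochains: it integrates a
cochain along the spanning tree rooted at vertex `0` and made of the edges `0`, `4`, `2`. -/
def homotopy₁ : Matrix (Fin 4) (Fin 8) ℤ :=
  !![0, 0, 0, 0, 0, 0, 0, 0;
     1, 0, 0, 0, 0, 0, 0, 0;
     0, 0, 0, 0, 1, 0, 0, 0;
     0, 0, 1, 0, 1, 0, 0, 0]

/-- The component `h²` of the homotopy, from two-cell cochains to edge cochains: on the image of
`δ¹` it picks the preimage supported on the edges `3`, `5`, `7`. -/
def homotopy₂ : Matrix (Fin 8) (Fin 8) ℤ :=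
  !![0, 0, 0, 0, 0, 0, 0, 0;
     0, 0, 0, 0, 0, 0, 0, 0;
     0, 0, 0, 0, 0, 0, 0, 0;
     0, 0, -1, 0, 1, 0, 0, 0;
     0, 0, 0, 0, 0, 0, 0, 0;
     1, 0, 0, 0, -1, 0, 0, 0;
     0, 0, 0, 0, 0, 0, 0, 0;
     0, 0, 1, 0, 0, 0, 0, 0]

/-- The projection `π⁰` of vertex cochains onto `H⁰`: the value at vertex `0`. -/
def proj₀ : Matrix (Fin 1) (Fin 4) ℤ := !![1, 0, 0, 0]

/-- The inclusion `ι⁰` of `H⁰` into vertex cochains, as the constant ones. -/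
def incl₀ : Matrix (Fin 4) (Fin 1) ℤ := !![1; 1; 1; 1]

/-- The projection `π¹` of edge cochains onto `H¹`: the values on the cycles formed by the edges
`0, 1` and by the edges `4, 6`. -/
def proj₁ : Matrix (Fin 2) (Fin 8) ℤ :=
  !![1, 1, 0, 0, 0, 0, 0, 0;
     0, 0, 0, 0, 1, 0, 1, 0]

/-- The inclusion `ι¹` of `H¹` into edge cochains: the cocycles that vanish on the edges `0`, `4`
and `2` of the spanning tree. -/
def incl₁ : Matrix (Fin 8) (Fin 2) ℤ :=
  !![0, 0; 1, 0; 0, 0; -1, 0; 0, 0; 1, -1; 0, 1; -1, 0]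

/-- The projection `π²` of two-cell cochains onto `H²`; its rows generate the left kernel
of `δ¹`. -/
def proj₂ : Matrix (Fin 5) (Fin 8) ℤ :=
  !![-1, 1, 0, 0, 0, 0, 0, 0;
     -1, 0, 1, 1, 0, 0, 0, 0;
     -1, 0, 2, 0, -1, 1, 0, 0;
     -1, 0, 0, 0, 0, 0, 1, 0;
     -1, 0, 0, 0, 0, 0, 0, 1]

/-- The inclusion `ι²` of `H²` into two-cell cochains: those supported on the cells `1`, `3`, `5`,
`6` and `7`. -/
def incl₂ : Matrix (Fin 8) (Fin 5) ℤ :=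
  !![0, 0, 0, 0, 0;
     1, 0, 0, 0, 0;
     0, 0, 0, 0, 0;
     0, 1, 0, 0, 0;
     0, 0, 0, 0, 0;
     0, 0, 1, 0, 0;
     0, 0, 0, 1, 0;
     0, 0, 0, 0, 1]

theorem boundary₁_mul_boundary₂ : boundary₁ * boundary₂ = 0 := by decide

theorem coboundary₁_mul_coboundary₀ : coboundary₁ * coboundary₀ = 0 := by
  rw [coboundary₁, coboundary₀, ← Matrix.transpose_mul, boundary₁_mul_boundary₂,
    Matrix.transpose_zero]

theorem coboundary₀_mul_incl₀ : coboundary₀ * incl₀ = 0 := by decide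

theorem proj₀_mul_incl₀ : proj₀ * incl₀ = 1 := by decide

theorem homotopy_identity₀ : incl₀ * proj₀ + homotopy₁ * coboundary₀ = 1 := by decide

theorem coboundary₁_mul_incl₁ : coboundary₁ * incl₁ = 0 := by decide

theorem proj₁_mul_coboundary₀ : proj₁ * coboundary₀ = 0 := by decide

theorem proj₁_mul_incl₁ : proj₁ * incl₁ = 1 := by decide

theorem homotopy_identity₁ :
    coboundary₀ * homotopy₁ + incl₁ * proj₁ + homotopy₂ * coboundary₁ = 1 := by decide

theorem proj₂_mul_coboundary₁ : proj₂ * coboundary₁ = 0 := by decide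

theorem proj₂_mul_incl₂ : proj₂ * incl₂ = 1 := by decide

theorem homotopy_identity₂ : coboundary₁ * homotopy₂ + incl₂ * proj₂ = 1 := by decide

variable (R : Type*) [CommRing R]

theorem nonempty_ker_coboundary₀_equiv :
    Nonempty (LinearMap.ker (toLinOver R coboundary₀) ≃ₗ[R] R) := by
  refine ⟨kerEquivOfHomotopy (π := toLinOver R proj₀) (ι := toLinOver R incl₀)
    (h := toLinOver R homotopy₁) ?_ ?_ ?_ ≪≫ₗ LinearEquiv.funUnique (Fin 1) R R⟩
  · rw [← toLinOver_mul, coboundary₀_mul_incl₀, toLinOver_zero]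
  · rw [← toLinOver_mul, proj₀_mul_incl₀, toLinOver_one]
  · simp only [← toLinOver_mul, ← toLinOver_add, toLinOver_one, homotopy_identity₀]

theorem nonempty_ker_coboundary₁_quotient_range_coboundary₀_equiv :
    Nonempty ((LinearMap.ker (toLinOver R coboundary₁) ⧸
      (LinearMap.range (toLinOver R coboundary₀)).comap
        (LinearMap.ker (toLinOver R coboundary₁)).subtype) ≃ₗ[R] (Fin 2 → R)) := by
  refine ⟨kerQuotientRangeEquivOfHomotopy (π := toLinOver R proj₁) (ι := toLinOver R incl₁)
    (k := toLinOver R homotopy₁) (h := toLinOver R homotopy₂) ?_ ?_ ?_ ?_⟩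
  · rw [← toLinOver_mul, coboundary₁_mul_incl₁, toLinOver_zero]
  · rw [← toLinOver_mul, proj₁_mul_coboundary₀, toLinOver_zero]
  · rw [← toLinOver_mul, proj₁_mul_incl₁, toLinOver_one]
  · simp only [← toLinOver_mul, ← toLinOver_add, toLinOver_one, homotopy_identity₁]

theorem nonempty_quotient_range_coboundary₁_equiv :
    Nonempty (((Fin 8 → R) ⧸ LinearMap.range (toLinOver R coboundary₁)) ≃ₗ[R] (Fin 5 → R)) := by
  refine ⟨quotientRangeEquivOfHomotopy (π := toLinOver R proj₂) (ι := toLinOver R incl₂)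
    (k := toLinOver R homotopy₂) ?_ ?_ ?_⟩
  · rw [← toLinOver_mul, proj₂_mul_coboundary₁, toLinOver_zero]
  · rw [← toLinOver_mul, proj₂_mul_incl₂, toLinOver_one]
  · simp only [← toLinOver_mul, ← toLinOver_add, toLinOver_one, homotopy_identity₂]

end Pinwheel

open Pinwheel in
theorem stmt_12_general (R : Type*) [CommRing R] :
    boundary₁ * boundary₂ = 0 ∧
    toLinOver R coboundary₁ ∘ₗ toLinOver R coboundary₀ = 0 ∧
    Nonempty (LinearMap.ker (toLinOver R coboundary₀) ≃ₗ[R] R) ∧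
    Nonempty ((LinearMap.ker (toLinOver R coboundary₁) ⧸
      (LinearMap.range (toLinOver R coboundary₀)).comap
        (LinearMap.ker (toLinOver R coboundary₁)).subtype) ≃ₗ[R] (Fin 2 → R)) ∧
    Nonempty (((Fin 8 → R) ⧸ LinearMap.range (toLinOver R coboundary₁)) ≃ₗ[R] (Fin 5 → R)) :=
  ⟨boundary₁_mul_boundary₂,
    by rw [← toLinOver_mul, coboundary₁_mul_coboundary₀, toLinOver_zero],
    nonempty_ker_coboundary₀_equiv R,
    nonempty_ker_coboundary₁_quotient_range_coboundary₀_equiv R,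
    nonempty_quotient_range_coboundary₁_equiv R⟩

/-- The boundary matrices `∂₁` (4×8) and `∂₂` (8×8) of the eventual range of the vertex
stratum of the pinwheel approximant satisfy `∂₁ · ∂₂ = 0`; hence the transposed maps
`δ⁰ = ∂₁ᵀ : ℤ⁴ → ℤ⁸` and `δ¹ = ∂₂ᵀ : ℤ⁸ → ℤ⁸` form a cochain complex (`δ¹ ∘ δ⁰ = 0`),
whose cohomology groups are `H⁰ = ker δ⁰ ≅ ℤ`, `H¹ = ker δ¹ / im δ⁰ ≅ ℤ²`, and
`H² = ℤ⁸ / im δ¹ ≅ ℤ⁵`. -/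
theorem stmt_12 :
    let d1 : Matrix (Fin 4) (Fin 8) ℤ :=
      !![-1, 1, 0, 0, -1, 0, 1, 0;
          1, -1, 0, 0, 0, -1, 0, 1;
          0, 0, -1, 1, 1, 0, -1, 0;
          0, 0, 1, -1, 0, 1, 0, -1]
    let d2 : Matrix (Fin 8) (Fin 8) ℤ :=
      !![1, 1, 0, 1, 1, 2, 1, 1;
         1, 1, 1, 0, 2, 1, 1, 1;
         1, 1, 1, 0, 2, 1, 1, 1;
         1, 1, 0, 1, 1, 2, 1, 1;
         1, 1, 1, 0, 1, 0, 1, 1;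
         1, 1, 0, 1, 0, 1, 1, 1;
         1, 1, 0, 1, 0, 1, 1, 1;
         1, 1, 1, 0, 1, 0, 1, 1]
    let δ0 : (Fin 4 → ℤ) →ₗ[ℤ] (Fin 8 → ℤ) := Matrix.toLin' d1.transpose
    let δ1 : (Fin 8 → ℤ) →ₗ[ℤ] (Fin 8 → ℤ) := Matrix.toLin' d2.transpose
    d1 * d2 = 0 ∧
    δ1.comp δ0 = 0 ∧
    Nonempty ((LinearMap.ker δ0) ≃+ ℤ) ∧
    Nonempty
      ((LinearMap.ker δ1 ⧸
          Submodule.comap (LinearMap.ker δ1).subtype (LinearMap.range δ0)) ≃+ (Fin 2 → ℤ)) ∧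
    Nonempty (((Fin 8 → ℤ) ⧸ LinearMap.range δ1) ≃+ (Fin 5 → ℤ)) := by
  obtain ⟨hd, hδ, ⟨e₀⟩, ⟨e₁⟩, ⟨e₂⟩⟩ := stmt_12_general ℤ
  -- `algebraMap ℤ ℤ` unfolds to the identity, hence `toLinOver ℤ A` to `Matrix.toLin' A`.
  exact ⟨hd, hδ, ⟨e₀.toAddEquiv⟩, ⟨e₁.toAddEquiv⟩, ⟨e₂.toAddEquiv⟩⟩
end
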